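/- For all n ≥ 0 and all I, J ∈ P_n: the (I,J) entry of AM_n is nonzero if and only if J ⊆ I. In particular, AM_n is a lower triangular matrix with respect to the anti-lexicographic order on P_n, and A_n = AM_n · Z_n is an LU factorization of A_n, where Z_n = M_n^{−1} is the zeta matrix with (Z_n)_{I,J} = 1 if I ⊆ J and 0 otherwise. -/

import Mathlib

/-!
Splitting the index set by membership of the largest element gives `M_{n+1} = [[M, -M], [0, M]]`,
hence, with `AM = A_n M_n` and `BM = B_n M_n`,
`AM_{n+1} = [[AM, 0], [AM, -(AM + BM)]]` and `BM_{n+1} = [[AM, 0], [0, -BM]]`.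
The zero pattern of `AM` alone does not pass through the induction, since the corner block
involves `AM + BM`. What does is the family `a • AM + b • BM` with `a > 0` and `b ≥ 0`: one level up
its blocks are `0`, `(a + b) • AM`, `a • AM` and `-(a • AM + (a + b) • BM)`, the last three in the family
up to sign (`combo_ne_zero_iff`). The same block recursion shows `M_n Z_n = 1`.
-/

open Finset

/-- Restriction of a subset of `Fin (n+1)` to `Fin n` (forgetting the top element). -/
def resSet {n : ℕ} (I : Finset (Fin (n + 1))) : Finset (Fin n) :=
  Finset.univ.filter (fun j : Fin n => Fin.castSucc j ∈ I)

mutual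
  /-- The matrix `A_n`, rows/columns indexed by subsets of `{1,…,n}` (element `j`
  of `[n]` corresponds to `j-1 : Fin n`, i.e. anti-lexicographic/binary order). -/
  def Amat : (n : ℕ) → Matrix (Finset (Fin n)) (Finset (Fin n)) ℤ
    | 0 => Matrix.of fun _ _ => 1
    | n + 1 => Matrix.of fun I J =>
        if Fin.last n ∈ I then
          if Fin.last n ∈ J then - Bmat n (resSet I) (resSet J)
          else Amat n (resSet I) (resSet J)
        else Amat n (resSet I) (resSet J)
  /-- The matrix `B_n`. -/
  def Bmat : (n : ℕ) → Matrix (Finset (Fin n)) (Finset (Fin n)) ℤ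
    | 0 => Matrix.of fun _ _ => 1
    | n + 1 => Matrix.of fun I J =>
        if Fin.last n ∈ I then
          if Fin.last n ∈ J then - Bmat n (resSet I) (resSet J)
          else 0
        else Amat n (resSet I) (resSet J)
end

/-- The Walsh-Hadamard matrix `H_n`. -/
def Hmat : (n : ℕ) → Matrix (Finset (Fin n)) (Finset (Fin n)) ℤ
  | 0 => Matrix.of fun _ _ => 1
  | n + 1 => Matrix.of fun I J =>
      if Fin.last n ∈ I ∧ Fin.last n ∈ J then - Hmat n (resSet I) (resSet J)
      else Hmat n (resSet I) (resSet J)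

/-- The Möbius matrix `M_n` of the boolean lattice. -/
def Mobmat (n : ℕ) : Matrix (Finset (Fin n)) (Finset (Fin n)) ℤ :=
  Matrix.of fun I J => if I ⊆ J then (-1) ^ (J \ I).card else 0

/-- The zeta matrix `Z_n` of the boolean lattice. -/
def Zetamat (n : ℕ) : Matrix (Finset (Fin n)) (Finset (Fin n)) ℤ :=
  Matrix.of fun I J => if I ⊆ J then 1 else 0

/-- The subset of `[n] = {1,…,n}` corresponding to a subset of `Fin n`. -/
def natSet {n : ℕ} (I : Finset (Fin n)) : Finset ℕ := Finset.image (fun j : Fin n => (j : ℕ) + 1) I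

/-- The ordinal number of a subset in the anti-lexicographic order. -/
def ordFin {n : ℕ} (I : Finset (Fin n)) : ℕ := ∑ j ∈ I, 2 ^ (j : ℕ)

/-- The run (maximal interval of consecutive integers) of `I` containing `j`
(empty if `j ∉ I`). -/
def runOf (I : Finset ℕ) (j : ℕ) : Finset ℕ :=
  I.filter (fun i => ∀ k ∈ Finset.Icc (min i j) (max i j), k ∈ I)

/-- The set of runs (maximal intervals of consecutive integers) of `I`. -/
def runsOf (I : Finset ℕ) : Finset (Finset ℕ) := I.image (runOf I)

/-- `P` is a prefix of the interval `R`: it consists of an initial segment of `R`. -/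
def IsPrefixOf (P R : Finset ℕ) : Prop :=
  P ⊆ R ∧ ∀ i ∈ R, ∀ j ∈ P, i ≤ j → i ∈ P


/-- A subset of `Fin n` seen as a subset of `Fin (n + 1)`, with the top element adjoined
when `b` is true. -/
def extSet {n : ℕ} (K : Finset (Fin n)) (b : Bool) : Finset (Fin (n + 1)) :=
  if b then insert (Fin.last n) (K.map Fin.castSuccEmb) else K.map Fin.castSuccEmb

lemma mem_resSet {n : ℕ} (I : Finset (Fin (n + 1))) (j : Fin n) :
    j ∈ resSet I ↔ j.castSucc ∈ I := by simp [resSet]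

lemma castSucc_mem_extSet {n : ℕ} (K : Finset (Fin n)) (b : Bool) (j : Fin n) :
    j.castSucc ∈ extSet K b ↔ j ∈ K := by
  cases b <;> simp [extSet, Fin.castSucc_ne_last]

lemma last_mem_extSet {n : ℕ} (K : Finset (Fin n)) (b : Bool) :
    Fin.last n ∈ extSet K b ↔ b = true := by
  cases b <;> simp [extSet, Fin.castSucc_ne_last]

lemma resSet_extSet {n : ℕ} (K : Finset (Fin n)) (b : Bool) : resSet (extSet K b) = K := by
  ext j; rw [mem_resSet, castSucc_mem_extSet]

/-- Subsets of `Fin (n + 1)` correspond to subsets of `Fin n` together with the membership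
of the top element; this is the `2 × 2` block decomposition of the index set. -/
def splitEquiv (n : ℕ) : Finset (Fin n) × Bool ≃ Finset (Fin (n + 1)) where
  toFun p := extSet p.1 p.2
  invFun I := (resSet I, decide (Fin.last n ∈ I))
  left_inv p := by
    ext1
    · exact resSet_extSet _ _
    · simp [last_mem_extSet]
  right_inv I := by
    ext j
    refine Fin.lastCases ?_ (fun j => ?_) j
    · simp [last_mem_extSet]
    · rw [castSucc_mem_extSet, mem_resSet]

lemma sum_split {n : ℕ} (f : Finset (Fin (n + 1)) → ℤ) :
    ∑ K, f K = ∑ K, f (extSet K false) + ∑ K, f (extSet K true) := by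
  rw [← (splitEquiv n).sum_comp, Fintype.sum_prod_type, ← Finset.sum_add_distrib]
  refine Finset.sum_congr rfl fun K _ => ?_
  rw [Fintype.sum_bool, add_comm]
  rfl

lemma subset_iff_split {n : ℕ} (I J : Finset (Fin (n + 1))) :
    I ⊆ J ↔ resSet I ⊆ resSet J ∧ (Fin.last n ∈ I → Fin.last n ∈ J) := by
  simp only [Finset.subset_iff, mem_resSet, Fin.forall_fin_succ']

lemma card_split {n : ℕ} (I : Finset (Fin (n + 1))) :
    I.card = (resSet I).card + if Fin.last n ∈ I then 1 else 0 := by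
  have h : ∀ {m : ℕ} (K : Finset (Fin m)), K.card = ∑ i, if i ∈ K then 1 else 0 := by
    intro m K; simp
  rw [h I, h (resSet I), Fin.sum_univ_castSucc]
  simp only [mem_resSet]

lemma resSet_sdiff {n : ℕ} (I J : Finset (Fin (n + 1))) :
    resSet (J \ I) = resSet J \ resSet I := by
  ext j; simp [mem_resSet]

lemma Mobmat_succ {n : ℕ} (I J : Finset (Fin (n + 1))) :
    Mobmat (n + 1) I J =
      if Fin.last n ∈ I then
        if Fin.last n ∈ J then Mobmat n (resSet I) (resSet J) else 0
      else if Fin.last n ∈ J then -Mobmat n (resSet I) (resSet J)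
        else Mobmat n (resSet I) (resSet J) := by
  simp only [Mobmat, Matrix.of_apply, subset_iff_split I J, card_split (J \ I), resSet_sdiff,
    Finset.mem_sdiff]
  by_cases hI : Fin.last n ∈ I <;> by_cases hJ : Fin.last n ∈ J <;>
    by_cases h : resSet I ⊆ resSet J <;> simp [hI, hJ, h, pow_succ]

lemma Zetamat_succ {n : ℕ} (I J : Finset (Fin (n + 1))) :
    Zetamat (n + 1) I J =
      if Fin.last n ∈ I ∧ Fin.last n ∉ J then 0 else Zetamat n (resSet I) (resSet J) := by
  simp only [Zetamat, Matrix.of_apply, subset_iff_split I J]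
  by_cases hI : Fin.last n ∈ I <;> by_cases hJ : Fin.last n ∈ J <;> simp [hI, hJ]

lemma AM_succ {n : ℕ} (I J : Finset (Fin (n + 1))) :
    (Amat (n + 1) * Mobmat (n + 1)) I J =
      if Fin.last n ∈ J then
        if Fin.last n ∈ I then
          -((Amat n * Mobmat n) (resSet I) (resSet J) + (Bmat n * Mobmat n) (resSet I) (resSet J))
        else 0
      else (Amat n * Mobmat n) (resSet I) (resSet J) := by
  simp only [Matrix.mul_apply, sum_split, Mobmat_succ, Amat, Matrix.of_apply, last_mem_extSet,
    resSet_extSet]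
  by_cases hI : Fin.last n ∈ I <;> by_cases hJ : Fin.last n ∈ J <;>
    simp [hI, hJ] <;> ring

lemma BM_succ {n : ℕ} (I J : Finset (Fin (n + 1))) :
    (Bmat (n + 1) * Mobmat (n + 1)) I J =
      if Fin.last n ∈ J then
        if Fin.last n ∈ I then -(Bmat n * Mobmat n) (resSet I) (resSet J) else 0
      else if Fin.last n ∈ I then 0 else (Amat n * Mobmat n) (resSet I) (resSet J) := by
  simp only [Matrix.mul_apply, sum_split, Mobmat_succ, Bmat, Matrix.of_apply, last_mem_extSet,
    resSet_extSet]
  by_cases hI : Fin.last n ∈ I <;> by_cases hJ : Fin.last n ∈ J <;>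
    simp [hI, hJ]

/-- The zero pattern, strengthened to all combinations `a • AM + b • BM` with `a > 0`, `b ≥ 0`
so that it is inherited by every nonzero block. -/
lemma combo_ne_zero_iff (n : ℕ) : ∀ (a b : ℤ), 0 < a → 0 ≤ b → ∀ I J : Finset (Fin n),
    a * (Amat n * Mobmat n) I J + b * (Bmat n * Mobmat n) I J ≠ 0 ↔ J ⊆ I := by
  induction n with
  | zero =>
    intro a b ha hb I J
    obtain rfl := Subsingleton.elim I J
    have : a + b ≠ 0 := by omega
    obtain rfl := Subsingleton.elim I ∅
    simpa [Matrix.mul_apply, Amat, Bmat, Mobmat, Subsingleton.elim _ (∅ : Finset (Fin 0))] using this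
  | succ n ih =>
    intro a b ha hb I J
    rw [AM_succ, BM_succ, subset_iff_split J I]
    by_cases hI : Fin.last n ∈ I <;> by_cases hJ : Fin.last n ∈ J <;>
      simp only [hI, hJ, if_true, if_false, imp_self, and_true]
    · rw [← ih a (a + b) ha (by omega), ← neg_ne_zero]
      ring_nf
    · rw [← ih a 0 ha le_rfl]
      simp
    · simp
    · rw [← ih (a + b) 0 (by omega) le_rfl]
      ring_nf

lemma Mobmat_mul_Zetamat (n : ℕ) : Mobmat n * Zetamat n = 1 := by
  induction n with
  | zero =>
    ext I J
    obtain rfl := Subsingleton.elim I J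
    obtain rfl := Subsingleton.elim I ∅
    simp [Matrix.mul_apply, Mobmat, Zetamat, Subsingleton.elim _ (∅ : Finset (Fin 0))]
  | succ n ih =>
    ext I J
    have h : ∑ K, Mobmat n (resSet I) K * Zetamat n K (resSet J)
        = if resSet I = resSet J then 1 else 0 := by
      rw [← Matrix.mul_apply, ih, Matrix.one_apply]
    have hIJ : I = J ↔ resSet I = resSet J ∧ (Fin.last n ∈ I ↔ Fin.last n ∈ J) := by
      simp only [Finset.ext_iff, mem_resSet, Fin.forall_fin_succ']
    simp only [Matrix.mul_apply, sum_split, Mobmat_succ, Zetamat_succ, last_mem_extSet,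
      resSet_extSet, Matrix.one_apply, hIJ]
    by_cases hI : Fin.last n ∈ I <;> by_cases hJ : Fin.last n ∈ J <;>
      simp [hI, hJ, h]

/-- The `(I,J)` entry of `AM_n = A_n · M_n` is nonzero iff `J ⊆ I`;
in particular `AM_n` is lower triangular in the anti-lexicographic order, and
`A_n = AM_n · Z_n` is an LU factorization, where the zeta matrix `Z_n` (which is
upper triangular) is the inverse of `M_n`. -/
theorem AM_zero_pattern (n : ℕ) :
    (∀ I J : Finset (Fin n), (Amat n * Mobmat n) I J ≠ 0 ↔ J ⊆ I) ∧
    (∀ I J : Finset (Fin n), ordFin I < ordFin J → (Amat n * Mobmat n) I J = 0) ∧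
    Amat n = (Amat n * Mobmat n) * Zetamat n ∧
    Zetamat n = (Mobmat n)⁻¹ := by
  have hpat : ∀ I J : Finset (Fin n), (Amat n * Mobmat n) I J ≠ 0 ↔ J ⊆ I := fun I J => by
    simpa using combo_ne_zero_iff n 1 0 one_pos le_rfl I J
  refine ⟨hpat, fun I J hlt => ?_, ?_, ?_⟩
  · by_contra h
    exact absurd (Finset.sum_le_sum_of_subset ((hpat I J).1 h)) (not_le.2 hlt)
  · rw [Matrix.mul_assoc, Mobmat_mul_Zetamat, Matrix.mul_one]
  · exact (Matrix.inv_eq_right_inv (Mobmat_mul_Zetamat n)).symm
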